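/- Let V∞ > 0 and E₀ > 0, and let {(Θ_ν, V_ν)}_{ν>0} be a family of solutions of the reduced self-similar Navier–Stokes system satisfying the uniform bound (B) and such that (1−x²)Θ_ν(x) → 0 as x → 1⁻ for each ν. Then the functions A_ν(x) = (1−x²)Θ_ν(x) are of bounded variation on [0,1] with total variation bounded uniformly in ν (each A_ν is first nonincreasing and then nondecreasing, with |A_ν(x)| ≤ √(2E₀+V∞²)·√(x(1−x))), and consequently there exist a sequence ν_k → 0 and a function Θ such that Θ_{ν_k}(x) → Θ(x) for almost every x ∈ (0,1). -/

import Mathlib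

open Set Filter MeasureTheory intervalIntegral

/-- The functional `H(V;x) = ∫ₓ¹ ((1−t²)/t²) (∫₀ᵗ (σ/(1−σ²)²) V(σ)² dσ) dt`. -/
noncomputable def Hfun (V : ℝ → ℝ) (x : ℝ) : ℝ :=
  ∫ t in x..1, ((1 - t ^ 2) / t ^ 2) * ∫ σ in (0 : ℝ)..t, (σ / (1 - σ ^ 2) ^ 2) * V σ ^ 2

/-- The functional `F(V;x) = (x/(1−x²)²)(H(V;x) + E₀(1−x))`. -/
noncomputable def Ffun (E₀ : ℝ) (V : ℝ → ℝ) (x : ℝ) : ℝ :=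
  (x / (1 - x ^ 2) ^ 2) * (Hfun V x + E₀ * (1 - x))

/-- A solution of the reduced self-similar Navier–Stokes system with viscosity `ν`, pressure
constant `E₀` and swirl `V∞` at the vortex line: `Θ ∈ C¹([0,1))`, `V ∈ C²([0,1))`,
`ν Θ' = Θ²/2 − F(V;x)` and `ν V'' = Θ V'` on `(0,1)`, `Θ(0) = V(0) = 0` and `V → V∞` as
`x → 1⁻`. -/
structure IsNSSolution (ν E₀ Vinf : ℝ) (Θ V : ℝ → ℝ) : Prop where
  hΘreg : ContDiffOn ℝ 1 Θ (Set.Ico 0 1)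
  hVreg : ContDiffOn ℝ 2 V (Set.Ico 0 1)
  hΘeq : ∀ x ∈ Set.Ioo (0 : ℝ) 1, ν * deriv Θ x = Θ x ^ 2 / 2 - Ffun E₀ V x
  hVeq : ∀ x ∈ Set.Ioo (0 : ℝ) 1, ν * deriv (deriv V) x = Θ x * deriv V x
  hΘ0 : Θ 0 = 0
  hV0 : V 0 = 0
  hV1 : Tendsto V (nhdsWithin 1 (Set.Iio 1)) (nhds Vinf)

/-- The uniform bound (B): `−√(2E₀+V∞²) √(x(1−x))/(1−x²) < Θ(x) < 0` on `(0,1)`. -/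
def BoundB (E₀ Vinf : ℝ) (Θ : ℝ → ℝ) : Prop :=
  ∀ x ∈ Set.Ioo (0 : ℝ) 1,
    -Real.sqrt (2 * E₀ + Vinf ^ 2) * Real.sqrt (x * (1 - x)) / (1 - x ^ 2) < Θ x ∧ Θ x < 0

/-- `x` lies in the support of the measure `μ`: every open neighbourhood of `x` has positive
measure. -/
def MemSupport (μ : Measure ℝ) (x : ℝ) : Prop :=
  ∀ U : Set ℝ, IsOpen U → x ∈ U → 0 < μ U

open scoped Topology NNReal

/-!
Let `A = (1−x²)Θ` and `K = x (H + E₀(1−x))`, so that `F = K/(1−x²)²` and `K(0) = 0`. Since `V'`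
solves a linear homogeneous first-order equation, `V` is monotone and `V²` is nondecreasing, hence
`K'' = 2∫₀ˣ σ V²/(1−σ²)² dσ − V²/(1−x²) − 2E₀` is nonincreasing and `K'` is concave.

At a critical point of `A` the equation for `Θ` reads `K = A²/2 − 2νxA`. If `A < 0` had a local
maximum of value `c` at `q`, between local minima of smaller value at `p` and `r`, then
`K + 2νcx` would be `0` at `0`, equal to `c²/2` at `q` and larger than `c²/2` at `p` and `r`: it
would go up, down and up again, which the concavity of its derivative forbids. So `A` decreases
and then increases, its variation on `[0,1]` is `2 |min A|`, and Helly's selection theorem applies.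
-/

section Helly

theorem exists_subseq_tendsto_on_countable {α : Type*} {s : Set α} (hs : s.Countable)
    {u : ℕ → α → ℝ} (hu : ∀ x ∈ s, ∃ M, ∀ k, |u k x| ≤ M) :
    ∃ φ : ℕ → ℕ, StrictMono φ ∧
      ∀ x ∈ s, ∃ y, Tendsto (fun k => u (φ k) x) atTop (𝓝 y) := by
  have : Countable s := hs.to_subtype
  choose! M hM using hu
  have hcompact : IsCompact (univ.pi fun x : s => Icc (-M x) (M x)) :=
    isCompact_univ_pi fun _ => isCompact_Icc
  obtain ⟨L, -, φ, hφ, hL⟩ := hcompact.tendsto_subseq (x := fun k (x : s) => u k x)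
    fun k x _ => abs_le.1 (hM x x.2 k)
  exact ⟨φ, hφ, fun x hx => ⟨L ⟨x, hx⟩, tendsto_pi_nhds.1 hL ⟨x, hx⟩⟩⟩

theorem tendsto_of_monotone_of_tendsto_on_dense {α β ι : Type*}
    [LinearOrder α] [TopologicalSpace α] [OrderTopology α] [DenselyOrdered α]
    [NoMinOrder α] [NoMaxOrder α] [LinearOrder β] [TopologicalSpace β] [OrderTopology β]
    {l : Filter ι} {u : ι → α → β} (hu : ∀ i, Monotone (u i)) {s : Set α} (hs : Dense s)
    {G : α → β} (hG : ∀ x ∈ s, Tendsto (u · x) l (𝓝 (G x))) {x : α} (hx : ContinuousAt G x) :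
    Tendsto (u · x) l (𝓝 (G x)) := by
  refine tendsto_order.2 ⟨fun c hc => ?_, fun c hc => ?_⟩
  · obtain ⟨y, hyx, hy⟩ := mem_nhdsLE_iff_exists_Ioc_subset.1
      (mem_nhdsWithin_of_mem_nhds (hx.eventually_const_lt hc))
    obtain ⟨q, hqs, hyq, hqx⟩ := hs.exists_between hyx
    filter_upwards [(hG q hqs).eventually_const_lt (hy ⟨hyq, hqx.le⟩)] with i hi
    exact hi.trans_le (hu i hqx.le)
  · obtain ⟨y, hxy, hy⟩ := mem_nhdsGE_iff_exists_Ico_subset.1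
      (mem_nhdsWithin_of_mem_nhds (hx.eventually_lt_const hc))
    obtain ⟨q, hqs, hxq, hqy⟩ := hs.exists_between hxy
    filter_upwards [(hG q hqs).eventually_lt_const (hy ⟨hxq.le, hqy⟩)] with i hi
    exact (hu i hxq.le).trans_lt hi

theorem monotone_limsup {α ι : Type*} [Preorder α] {l : Filter ι} [l.NeBot] {u : ι → α → ℝ}
    (hu : ∀ i, Monotone (u i)) (hb : ∀ x, ∃ M, ∀ i, |u i x| ≤ M) :
    Monotone fun x => limsup (u · x) l := by
  intro x y hxy
  obtain ⟨A, hA⟩ := hb x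
  obtain ⟨B, hB⟩ := hb y
  exact limsup_le_limsup (.of_forall fun i => hu i hxy)
    (isBoundedUnder_of ⟨-A, fun i => (abs_le.1 (hA i)).1⟩).isCoboundedUnder_le
    (isBoundedUnder_of ⟨B, fun i => (abs_le.1 (hB i)).2⟩)

theorem exists_subseq_tendsto_of_monotone {u : ℕ → ℝ → ℝ} (hu : ∀ k, Monotone (u k))
    (hb : ∀ x, ∃ M, ∀ k, |u k x| ≤ M) :
    ∃ φ : ℕ → ℕ, StrictMono φ ∧
      ∃ G : ℝ → ℝ, ∀ x, Tendsto (fun k => u (φ k) x) atTop (𝓝 (G x)) := by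
  obtain ⟨φ, hφ, hrat⟩ := exists_subseq_tendsto_on_countable
    (countable_range ((↑) : ℚ → ℝ)) (u := u) fun x _ => hb x
  set S : ℝ → ℝ := fun x => limsup (fun k => u (φ k) x) atTop
  have hS : Monotone S :=
    monotone_limsup (fun k => hu (φ k)) fun x => (hb x).imp fun _ hM k => hM (φ k)
  have hS_rat : ∀ q ∈ range ((↑) : ℚ → ℝ),
      Tendsto (fun k => u (φ k) q) atTop (𝓝 (S q)) := fun q hq => by
    obtain ⟨y, hy⟩ := hrat q hq
    simpa only [S, hy.limsup_eq] using hy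
  have hcont : ∀ x, ContinuousAt S x → Tendsto (fun k => u (φ k) x) atTop (𝓝 (S x)) :=
    fun x hx => tendsto_of_monotone_of_tendsto_on_dense (fun k => hu (φ k))
      Rat.denseRange_cast hS_rat hx
  -- The limit is monotone, so only countably many points are left for a second extraction.
  obtain ⟨ψ, hψ, hdisc⟩ := exists_subseq_tendsto_on_countable
    hS.countable_not_continuousAt (u := fun k => u (φ k)) fun x _ =>
      (hb x).imp fun _ hM k => hM (φ k)
  have hlim : ∀ x, ∃ y, Tendsto (fun k => u (φ (ψ k)) x) atTop (𝓝 y) := fun x => by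
    by_cases hx : ContinuousAt S x
    · exact ⟨S x, (hcont x hx).comp hψ.tendsto_atTop⟩
    · exact hdisc x hx
  choose G hG using hlim
  exact ⟨φ ∘ ψ, hφ.comp hψ, G, hG⟩

variable {a b : ℝ}

theorem exists_subseq_tendsto_of_monotoneOn (hab : a ≤ b) {u : ℕ → ℝ → ℝ}
    (hu : ∀ k, MonotoneOn (u k) (Icc a b)) (hb : ∀ x ∈ Icc a b, ∃ M, ∀ k, |u k x| ≤ M) :
    ∃ φ : ℕ → ℕ, StrictMono φ ∧
      ∃ G : ℝ → ℝ, ∀ x ∈ Icc a b, Tendsto (fun k => u (φ k) x) atTop (𝓝 (G x)) := by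
  obtain ⟨φ, hφ, G, hG⟩ := exists_subseq_tendsto_of_monotone
    (u := fun k x => u k (projIcc a b hab x))
    (fun k _ _ hxy => hu k (projIcc a b hab _).2 (projIcc a b hab _).2 (monotone_projIcc hab hxy))
    fun x => hb _ (projIcc a b hab x).2
  refine ⟨φ, hφ, G, fun x hx => ?_⟩
  simpa only [projIcc_of_mem hab hx] using hG x

theorem exists_subseq_tendsto_of_eVariationOn_le (hab : a ≤ b) {u : ℕ → ℝ → ℝ} {C : ℝ≥0}
    (hC : ∀ k, eVariationOn (u k) (Icc a b) ≤ C) {M : ℝ} (hM : ∀ k, |u k a| ≤ M) :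
    ∃ φ : ℕ → ℕ, StrictMono φ ∧
      ∃ G : ℝ → ℝ, ∀ x ∈ Icc a b, Tendsto (fun k => u (φ k) x) atTop (𝓝 (G x)) := by
  have ha : a ∈ Icc a b := left_mem_Icc.2 hab
  have hBV : ∀ k, BoundedVariationOn (u k) (Icc a b) := fun k =>
    ne_top_of_le_ne_top ENNReal.coe_ne_top (hC k)
  have htoReal : ∀ k, (eVariationOn (u k) (Icc a b)).toReal ≤ C := fun k =>
    ENNReal.toReal_le_coe_of_le_coe (hC k)
  set P : ℕ → ℝ → ℝ := fun k => variationOnFromTo (u k) (Icc a b) a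
  have hP : ∀ k x, |P k x| ≤ C := fun k x =>
    (variationOnFromTo.abs_le_eVariationOn (hBV k)).trans (htoReal k)
  have hub : ∀ k, ∀ x ∈ Icc a b, |u k x| ≤ C + M := fun k x hx => calc
    |u k x| = |(u k x - u k a) + u k a| := by rw [sub_add_cancel]
    _ ≤ |u k x - u k a| + |u k a| := abs_add_le _ _
    _ ≤ C + M := add_le_add (((hBV k).dist_le hx ha).trans (htoReal k)) (hM k)
  obtain ⟨φ, hφ, G, hG⟩ := exists_subseq_tendsto_of_monotoneOn hab (u := P)
    (fun k => variationOnFromTo.monotoneOn (hBV k).locallyBoundedVariationOn ha)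
    fun x _ => ⟨C, fun k => hP k x⟩
  obtain ⟨ψ, hψ, H, hH⟩ := exists_subseq_tendsto_of_monotoneOn hab
    (u := fun k => P (φ k) - u (φ k))
    (fun k => variationOnFromTo.sub_self_monotoneOn (hBV _).locallyBoundedVariationOn ha)
    fun x hx => ⟨C + (C + M), fun k =>
      (abs_sub _ _).trans (add_le_add (hP (φ k) x) (hub (φ k) x hx))⟩
  refine ⟨φ ∘ ψ, hφ.comp hψ, G - H, fun x hx => ?_⟩
  refine (((hG x hx).comp hψ.tendsto_atTop).sub (hH x hx)).congr fun k => ?_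
  simp only [Function.comp_apply, Pi.sub_apply, sub_sub_cancel]

end Helly

section Unimodal

variable {f : ℝ → ℝ} {a b : ℝ}

theorem exists_antitoneOn_monotoneOn_of_quasiconvexOn (hab : a ≤ b)
    (hf : ContinuousOn f (Icc a b)) (hq : QuasiconvexOn ℝ (Icc a b) f) :
    ∃ c ∈ Icc a b, AntitoneOn f (Icc a c) ∧ MonotoneOn f (Icc c b) := by
  obtain ⟨c, hc, hmin⟩ := isCompact_Icc.exists_isMinOn (nonempty_Icc.2 hab) hf
  have le_max : ∀ {x y z}, x ∈ Icc a b → z ∈ Icc a b → x ≤ y → y ≤ z → f y ≤ max (f x) (f z) :=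
    fun {x y z} hx hz hxy hyz => ((hq (max (f x) (f z))).ordConnected.out ⟨hx, le_max_left _ _⟩
      ⟨hz, le_max_right _ _⟩ ⟨hxy, hyz⟩).2
  refine ⟨c, hc, fun x hx y hy hxy => ?_, fun x hx y hy hxy => ?_⟩
  · have hx' : x ∈ Icc a b := ⟨hx.1, hx.2.trans hc.2⟩
    exact (le_max hx' hc hxy hy.2).trans (max_le le_rfl (hmin hx'))
  · have hy' : y ∈ Icc a b := ⟨hc.1.trans hy.1, hy.2⟩
    exact (le_max hc hy' hx.1 hxy).trans (max_le (hmin hy') le_rfl)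

theorem eVariationOn_Icc_of_antitoneOn_of_monotoneOn {c : ℝ} (hc : c ∈ Icc a b)
    (hanti : AntitoneOn f (Icc a c)) (hmono : MonotoneOn f (Icc c b)) :
    eVariationOn f (Icc a b) = ENNReal.ofReal (f a - f c) + ENNReal.ofReal (f b - f c) := by
  have hneg : eVariationOn f (Icc a c) = eVariationOn (fun x => -f x) (Icc a c) := by
    simp only [eVariationOn, edist_neg_neg]
  have hleft := hanti.neg.eVariationOn_eq (left_mem_Icc.2 hc.1) (right_mem_Icc.2 hc.1)
  have hright := hmono.eVariationOn_eq (left_mem_Icc.2 hc.2) (right_mem_Icc.2 hc.2)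
  have hadd := eVariationOn.Icc_add_Icc f (s := univ) hc.1 hc.2 (mem_univ c)
  rw [inter_self] at hleft hright
  rw [univ_inter, univ_inter, univ_inter] at hadd
  rw [← hadd, hneg, hleft, hright, neg_sub_neg]

theorem exists_lt_and_gt_of_not_quasiconvexOn (hq : ¬QuasiconvexOn ℝ (Icc a b) f) :
    ∃ x ∈ Icc a b, ∃ z ∈ Icc a b, ∃ y, x < y ∧ y < z ∧ f x < f y ∧ f z < f y := by
  contrapose! hq
  refine fun r => OrdConnected.convex ⟨fun x hx z hz y hy => ⟨?_, ?_⟩⟩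
  · exact ⟨hx.1.1.trans hy.1, hy.2.trans hz.1.2⟩
  · rcases hy.1.eq_or_lt with rfl | hxy
    · exact hx.2
    rcases hy.2.eq_or_lt with rfl | hyz
    · exact hz.2
    by_contra! hry
    exact ((hq x hx.1 z hz.1 y hxy hyz (hx.2.trans_lt hry)).trans hz.2).not_gt hry

theorem exists_isLocalMin_isLocalMax_isLocalMin (hf : ContinuousOn f (Icc a b))
    (ha : ∀ x ∈ Ioo a b, f x < f a) (hb : ∀ x ∈ Ioo a b, f x < f b)
    (hq : ¬QuasiconvexOn ℝ (Icc a b) f) :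
    ∃ p q r, a < p ∧ p < q ∧ q < r ∧ r < b ∧ IsLocalMin f p ∧ IsLocalMax f q ∧
      IsLocalMin f r ∧ f p < f q ∧ f r < f q := by
  obtain ⟨x, hx, z, hz, y, hxy, hyz, hfx, hfz⟩ := exists_lt_and_gt_of_not_quasiconvexOn hq
  obtain ⟨q, hq, hqmax⟩ := isCompact_Icc.exists_isMaxOn (nonempty_Icc.2 (hxy.trans hyz).le)
    (hf.mono (Icc_subset_Icc hx.1 hz.2))
  have hyq : f y ≤ f q := hqmax ⟨hxy.le, hyz.le⟩
  have hxq : x < q := hq.1.lt_of_ne fun h => (hfx.trans_le hyq).ne (h ▸ rfl)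
  have hqz : q < z := hq.2.lt_of_ne fun h => (hfz.trans_le hyq).ne (h ▸ rfl)
  have haq : a < q := hx.1.trans_lt hxq
  have hqb : q < b := hqz.trans_le hz.2
  obtain ⟨p, hp, hpmin⟩ := isCompact_Icc.exists_isMinOn (nonempty_Icc.2 haq.le)
    (hf.mono (Icc_subset_Icc le_rfl hqb.le))
  obtain ⟨r, hr, hrmin⟩ := isCompact_Icc.exists_isMinOn (nonempty_Icc.2 hqb.le)
    (hf.mono (Icc_subset_Icc haq.le le_rfl))
  have hfp : f p < f q := (hpmin ⟨hx.1, hxq.le⟩).trans_lt (hfx.trans_le hyq)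
  have hfr : f r < f q := (hrmin ⟨hqz.le, hz.2⟩).trans_lt (hfz.trans_le hyq)
  have hap : a < p := hp.1.lt_of_ne fun h => (hfp.trans (ha q ⟨haq, hqb⟩)).ne (h ▸ rfl)
  have hpq : p < q := hp.2.lt_of_ne fun h => hfp.ne (h ▸ rfl)
  have hqr : q < r := hr.1.lt_of_ne fun h => hfr.ne (h ▸ rfl)
  have hrb : r < b := hr.2.lt_of_ne fun h => (hfr.trans (hb q ⟨haq, hqb⟩)).ne (h ▸ rfl)
  exact ⟨p, q, r, hap, hpq, hqr, hrb, hpmin.isLocalMin (Icc_mem_nhds hap hpq),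
    hqmax.isLocalMax (Icc_mem_nhds hxq hqz), hrmin.isLocalMin (Icc_mem_nhds hqr hrb), hfp, hfr⟩

theorem le_of_quasiconcaveOn_deriv {f' : ℝ → ℝ} {p q r : ℝ} (hf : ContinuousOn f (Icc a r))
    (hf' : ∀ x ∈ Ioo a r, HasDerivAt f (f' x) x) (hconc : QuasiconcaveOn ℝ (Ioo a r) f')
    (hap : a < p) (hpq : p < q) (hqr : q < r) (hfap : f a < f p) (hfpq : f q ≤ f p) :
    f r ≤ f q := by
  by_contra! hfqr
  obtain ⟨s₁, ⟨has₁, hs₁p⟩, hs₁⟩ := exists_hasDerivAt_eq_slope f f' hap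
    (hf.mono (Icc_subset_Icc_right (hpq.trans hqr).le))
    fun x hx => hf' x ⟨hx.1, hx.2.trans (hpq.trans hqr)⟩
  obtain ⟨s₂, ⟨hps₂, hs₂q⟩, hs₂⟩ := exists_hasDerivAt_eq_slope f f' hpq
    (hf.mono (Icc_subset_Icc hap.le hqr.le)) fun x hx => hf' x ⟨hap.trans hx.1, hx.2.trans hqr⟩
  obtain ⟨s₃, ⟨hqs₃, hs₃r⟩, hs₃⟩ := exists_hasDerivAt_eq_slope f f' hqr
    (hf.mono (Icc_subset_Icc_left (hap.trans hpq).le))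
    fun x hx => hf' x ⟨(hap.trans hpq).trans hx.1, hx.2⟩
  have hpos₁ : 0 < f' s₁ := hs₁ ▸ div_pos (sub_pos.2 hfap) (sub_pos.2 hap)
  have hneg₂ : f' s₂ ≤ 0 :=
    hs₂ ▸ div_nonpos_of_nonpos_of_nonneg (sub_nonpos.2 hfpq) (sub_pos.2 hpq).le
  have hpos₃ : 0 < f' s₃ := hs₃ ▸ div_pos (sub_pos.2 hfqr) (sub_pos.2 hqr)
  have hmin : min (f' s₁) (f' s₃) ≤ f' s₂ :=
    ((hconc _).ordConnected.out
      ⟨⟨has₁, hs₁p.trans (hpq.trans hqr)⟩, min_le_left _ _⟩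
      ⟨⟨(hap.trans hpq).trans hqs₃, hs₃r⟩, min_le_right _ _⟩
      ⟨(hs₁p.trans hps₂).le, (hs₂q.trans hqs₃).le⟩).2
  exact (lt_min hpos₁ hpos₃).not_ge (hmin.trans hneg₂)

end Unimodal

theorem hasDerivAt_integral_of_continuousOn {f : ℝ → ℝ} {s : Set ℝ} (hs : s.OrdConnected)
    (hf : ContinuousOn f s) {a x : ℝ} (ha : a ∈ s) (hx : s ∈ 𝓝 x) :
    HasDerivAt (fun y => ∫ t in a..y, f t) (f x) x := by
  have hxs : x ∈ interior s := mem_interior_iff_mem_nhds.2 hx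
  exact integral_hasDerivAt_right
    (hf.mono (hs.uIcc_subset ha (interior_subset hxs))).intervalIntegrable
    ((hf.mono interior_subset).stronglyMeasurableAtFilter isOpen_interior x hxs)
    (hf.continuousAt hx)

theorem nonneg_or_nonpos_of_hasDerivAt_mul {p y : ℝ → ℝ} {a b : ℝ} (hp : ContinuousOn p (Ioo a b))
    (hy : ∀ x ∈ Ioo a b, HasDerivAt y (p x * y x) x) :
    (∀ x ∈ Ioo a b, 0 ≤ y x) ∨ ∀ x ∈ Ioo a b, y x ≤ 0 := by
  rcases (Ioo a b).eq_empty_or_nonempty with hempty | ⟨c, hc⟩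
  · simp only [hempty, mem_empty_iff_false, false_imp_iff, implies_true, or_self]
  set P : ℝ → ℝ := fun x => ∫ t in c..x, p t
  set W : ℝ → ℝ := fun x => y x * Real.exp (-P x)
  have hW : ∀ x ∈ Ioo a b, HasDerivAt W 0 x := fun x hx => by
    have hP : HasDerivAt P (p x) x :=
      hasDerivAt_integral_of_continuousOn ordConnected_Ioo hp hc (Ioo_mem_nhds hx.1 hx.2)
    exact ((hy x hx).mul hP.neg.exp).congr_deriv (by ring)
  have hy_eq : ∀ x ∈ Ioo a b, y x = W c * Real.exp (P x) := fun x hx => by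
    rw [← isOpen_Ioo.is_const_of_deriv_eq_zero isPreconnected_Ioo
      (fun z hz => (hW z hz).differentiableAt.differentiableWithinAt)
      (fun z hz => (hW z hz).deriv) hx hc, mul_assoc, ← Real.exp_add, neg_add_cancel,
      Real.exp_zero, mul_one]
  refine (le_total 0 (W c)).imp (fun h x hx => ?_) fun h x hx => ?_
  · exact hy_eq x hx ▸ mul_nonneg h (Real.exp_pos _).le
  · exact hy_eq x hx ▸ mul_nonpos_of_nonpos_of_nonneg h (Real.exp_pos _).le

theorem IsNSSolution.monotoneOn_or_antitoneOn {ν E₀ Vinf : ℝ} {Θ V : ℝ → ℝ}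
    (h : IsNSSolution ν E₀ Vinf Θ V) (hν : ν ≠ 0) :
    MonotoneOn V (Ico 0 1) ∨ AntitoneOn V (Ico 0 1) := by
  have hV : DifferentiableOn ℝ V (interior (Ico 0 1)) :=
    (h.hVreg.differentiableOn two_ne_zero).mono interior_subset
  have hV' : DifferentiableOn ℝ (deriv V) (Ioo 0 1) :=
    ((h.hVreg.mono Ioo_subset_Ico_self).deriv_of_isOpen (m := 1) isOpen_Ioo
      one_add_one_eq_two.le).differentiableOn one_ne_zero
  have hderiv : ∀ x ∈ Ioo 0 1, HasDerivAt (deriv V) (Θ x / ν * deriv V x) x := fun x hx =>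
    ((hV' x hx).differentiableAt (isOpen_Ioo.mem_nhds hx)).hasDerivAt.congr_deriv <| by
      rw [div_mul_eq_mul_div, eq_div_iff hν, mul_comm, h.hVeq x hx]
  refine (nonneg_or_nonpos_of_hasDerivAt_mul
    ((h.hΘreg.continuousOn.mono Ioo_subset_Ico_self).div_const ν) hderiv).imp
    (fun hsign => ?_) fun hsign => ?_
  · exact monotoneOn_of_deriv_nonneg (convex_Ico 0 1) h.hVreg.continuousOn hV
      (by rwa [interior_Ico])
  · exact antitoneOn_of_deriv_nonpos (convex_Ico 0 1) h.hVreg.continuousOn hV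
      (by rwa [interior_Ico])

theorem IsNSSolution.monotoneOn_sq {ν E₀ Vinf : ℝ} {Θ V : ℝ → ℝ}
    (h : IsNSSolution ν E₀ Vinf Θ V) (hν : ν ≠ 0) :
    MonotoneOn (fun x => V x ^ 2) (Ico 0 1) := by
  have h0 : (0 : ℝ) ∈ Ico (0 : ℝ) 1 := left_mem_Ico.2 one_pos
  intro x hx y hy hxy
  refine sq_le_sq.2 ?_
  rcases h.monotoneOn_or_antitoneOn hν with hV | hV
  · have hVx : 0 ≤ V x := h.hV0 ▸ hV h0 hx hx.1
    exact abs_le_abs_of_nonneg hVx (hV hx hy hxy)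
  · have hVx : V x ≤ 0 := h.hV0 ▸ hV h0 hx hx.1
    exact abs_le_abs_of_nonpos hVx (hV hx hy hxy)

theorem IsNSSolution.sq_le {ν E₀ Vinf : ℝ} {Θ V : ℝ → ℝ} (h : IsNSSolution ν E₀ Vinf Θ V)
    (hν : ν ≠ 0) {x : ℝ} (hx : x ∈ Ico 0 1) : V x ^ 2 ≤ Vinf ^ 2 := by
  refine ge_of_tendsto (h.hV1.pow 2) ?_
  filter_upwards [Ico_mem_nhdsLT hx.2] with y hy
  exact h.monotoneOn_sq hν hx ⟨hx.1.trans hy.1, hy.2⟩ hy.1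

/-- The inner integral `∫₀ᵗ (σ/(1−σ²)²) V(σ)² dσ` of `H(V;x)`. -/
noncomputable def swirlIntegral (V : ℝ → ℝ) (t : ℝ) : ℝ :=
  ∫ σ in (0 : ℝ)..t, (σ / (1 - σ ^ 2) ^ 2) * V σ ^ 2

/-- The numerator `K(x) = x (H(V;x) + E₀(1−x))` of `F(V;x) = K(x)/(1−x²)²`. -/
noncomputable def Kfun (E₀ : ℝ) (V : ℝ → ℝ) (x : ℝ) : ℝ :=
  x * (Hfun V x + E₀ * (1 - x))

theorem one_sub_sq_pos {x : ℝ} (hx : x ∈ Ico (0 : ℝ) 1) : 0 < 1 - x ^ 2 :=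
  sub_pos.2 (pow_lt_one₀ hx.1 hx.2 two_ne_zero)

theorem hasDerivAt_one_sub_sq (x : ℝ) : HasDerivAt (fun x : ℝ => 1 - x ^ 2) (-(2 * x)) x := by
  simpa using (hasDerivAt_pow 2 x).const_sub 1

theorem continuousOn_div_one_sub_sq_sq :
    ContinuousOn (fun σ : ℝ => σ / (1 - σ ^ 2) ^ 2) (Ico 0 1) :=
  continuousOn_id.div (by fun_prop) fun _ hσ => pow_ne_zero _ (one_sub_sq_pos hσ).ne'

theorem integral_div_one_sub_sq_sq {x y : ℝ} (hx : x ∈ Ico 0 1) (hy : y ∈ Ico 0 1) :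
    ∫ σ in x..y, σ / (1 - σ ^ 2) ^ 2 = ((1 - y ^ 2)⁻¹ - (1 - x ^ 2)⁻¹) / 2 := by
  have hxy : uIcc x y ⊆ Ico 0 1 := ordConnected_Ico.uIcc_subset hx hy
  rw [sub_div]
  refine integral_eq_sub_of_hasDerivAt (f := fun σ => (1 - σ ^ 2)⁻¹ / 2) (fun σ hσ => ?_)
    (continuousOn_div_one_sub_sq_sq.mono hxy).intervalIntegrable
  have hpos := one_sub_sq_pos (hxy hσ)
  refine (((hasDerivAt_one_sub_sq σ).inv hpos.ne').div_const 2).congr_deriv ?_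
  field_simp

section Swirl

variable {V : ℝ → ℝ} {x y : ℝ}

theorem swirlIntegral_nonneg (hx : 0 ≤ x) : 0 ≤ swirlIntegral V x :=
  integral_nonneg hx fun σ hσ => by have := hσ.1; positivity

theorem swirlIntegral_sub_le (hV : ContinuousOn V (Ico 0 1))
    (hmono : MonotoneOn (fun x => V x ^ 2) (Ico 0 1))
    (hx : x ∈ Ico 0 1) (hy : y ∈ Ico 0 1) (hxy : x ≤ y) :
    swirlIntegral V y - swirlIntegral V x ≤
      ((1 - y ^ 2)⁻¹ - (1 - x ^ 2)⁻¹) / 2 * V y ^ 2 := by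
  have h0 : (0 : ℝ) ∈ Ico (0 : ℝ) 1 := left_mem_Ico.2 one_pos
  have hint : ∀ {f : ℝ → ℝ} {a b : ℝ}, ContinuousOn f (Ico 0 1) → a ∈ Ico 0 1 → b ∈ Ico 0 1 →
      IntervalIntegrable f volume a b := fun hf ha hb =>
    (hf.mono (ordConnected_Ico.uIcc_subset ha hb)).intervalIntegrable
  have hdens : ContinuousOn (fun σ => σ / (1 - σ ^ 2) ^ 2 * V σ ^ 2) (Ico 0 1) :=
    continuousOn_div_one_sub_sq_sq.mul (hV.pow 2)
  calc swirlIntegral V y - swirlIntegral V x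
      = ∫ σ in x..y, σ / (1 - σ ^ 2) ^ 2 * V σ ^ 2 :=
        integral_interval_sub_left (hint hdens h0 hy) (hint hdens h0 hx)
    _ ≤ ∫ σ in x..y, σ / (1 - σ ^ 2) ^ 2 * V y ^ 2 := by
        refine integral_mono_on hxy (hint hdens hx hy)
          (hint (continuousOn_div_one_sub_sq_sq.mul continuousOn_const) hx hy) fun σ hσ => ?_
        have hσ0 : 0 ≤ σ := hx.1.trans hσ.1
        exact mul_le_mul_of_nonneg_left (hmono ⟨hσ0, hσ.2.trans_lt hy.2⟩ hy hσ.2) (by positivity)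
    _ = ((1 - y ^ 2)⁻¹ - (1 - x ^ 2)⁻¹) / 2 * V y ^ 2 := by
        rw [intervalIntegral.integral_mul_const, integral_div_one_sub_sq_sq hx hy]

theorem hasDerivAt_swirlIntegral (hV : ContinuousOn V (Ico 0 1)) (hx : x ∈ Ioo 0 1) :
    HasDerivAt (swirlIntegral V) (x / (1 - x ^ 2) ^ 2 * V x ^ 2) x :=
  hasDerivAt_integral_of_continuousOn ordConnected_Ico
    (continuousOn_div_one_sub_sq_sq.mul (hV.pow 2)) (left_mem_Ico.2 one_pos)
    (Ico_mem_nhds hx.1 hx.2)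

theorem continuousOn_Hfun_integrand (hV : ContinuousOn V (Ico 0 1)) :
    ContinuousOn (fun t => (1 - t ^ 2) / t ^ 2 * swirlIntegral V t) (Ioo 0 1) :=
  .mul (.div (by fun_prop) (by fun_prop) fun _ ht => pow_ne_zero _ ht.1.ne')
    fun _ ht => (hasDerivAt_swirlIntegral hV ht).continuousAt.continuousWithinAt

theorem Hfun_integrand_le (hV : ContinuousOn V (Ico 0 1))
    (hmono : MonotoneOn (fun x => V x ^ 2) (Ico 0 1)) (hx : x ∈ Ioo 0 1) :
    (1 - x ^ 2) / x ^ 2 * swirlIntegral V x ≤ V x ^ 2 / 2 := by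
  have hx' : x ∈ Ico 0 1 := Ioo_subset_Ico_self hx
  have hpos := one_sub_sq_pos hx'
  have hx0 : x ≠ 0 := hx.1.ne'
  have hle := swirlIntegral_sub_le hV hmono (left_mem_Ico.2 one_pos) hx' hx.1.le
  rw [show swirlIntegral V 0 = 0 from integral_same, sub_zero] at hle
  calc (1 - x ^ 2) / x ^ 2 * swirlIntegral V x
      ≤ (1 - x ^ 2) / x ^ 2 * (((1 - x ^ 2)⁻¹ - (1 - 0 ^ 2)⁻¹) / 2 * V x ^ 2) :=
        mul_le_mul_of_nonneg_left hle (by positivity)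
    _ = V x ^ 2 / 2 := by field_simp; ring

theorem integrableOn_Hfun_integrand (hV : ContinuousOn V (Ico 0 1))
    (hmono : MonotoneOn (fun x => V x ^ 2) (Ico 0 1)) {C : ℝ}
    (hC : ∀ x ∈ Ico 0 1, V x ^ 2 ≤ C) :
    IntegrableOn (fun t => (1 - t ^ 2) / t ^ 2 * swirlIntegral V t) (Icc 0 1) := by
  rw [integrableOn_Icc_iff_integrableOn_Ioo]
  refine IntegrableOn.of_bound measure_Ioo_lt_top
    ((continuousOn_Hfun_integrand hV).aestronglyMeasurable measurableSet_Ioo) (C / 2)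
    ((ae_restrict_mem measurableSet_Ioo).mono fun t ht => ?_)
  have hpos := one_sub_sq_pos (Ioo_subset_Ico_self ht)
  have hnonneg := swirlIntegral_nonneg (V := V) ht.1.le
  rw [Real.norm_of_nonneg (by positivity)]
  exact (Hfun_integrand_le hV hmono ht).trans
    (div_le_div_of_nonneg_right (hC t (Ioo_subset_Ico_self ht)) zero_le_two)

theorem continuousOn_Hfun (hV : ContinuousOn V (Ico 0 1))
    (hmono : MonotoneOn (fun x => V x ^ 2) (Ico 0 1)) {C : ℝ}
    (hC : ∀ x ∈ Ico 0 1, V x ^ 2 ≤ C) : ContinuousOn (Hfun V) (Icc 0 1) := by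
  have hint := integrableOn_Hfun_integrand hV hmono hC
  rw [← uIcc_of_le zero_le_one] at hint ⊢
  exact continuousOn_primitive_interval_left hint

theorem hasDerivAt_Hfun (hV : ContinuousOn V (Ico 0 1))
    (hmono : MonotoneOn (fun x => V x ^ 2) (Ico 0 1)) {C : ℝ}
    (hC : ∀ x ∈ Ico 0 1, V x ^ 2 ≤ C) (hx : x ∈ Ioo 0 1) :
    HasDerivAt (Hfun V) (-((1 - x ^ 2) / x ^ 2 * swirlIntegral V x)) x := by
  have hint : IntervalIntegrable (fun t => (1 - t ^ 2) / t ^ 2 * swirlIntegral V t) volume x 1 :=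
    ((integrableOn_Hfun_integrand hV hmono hC).mono_set (uIcc_of_le hx.2.le ▸
      Icc_subset_Icc_left hx.1.le)).intervalIntegrable
  have hcont := continuousOn_Hfun_integrand hV
  exact integral_hasDerivAt_left hint (hcont.stronglyMeasurableAtFilter isOpen_Ioo x hx)
    (hcont.continuousAt (isOpen_Ioo.mem_nhds hx))

variable {E₀ : ℝ}

theorem continuousOn_Kfun (hV : ContinuousOn V (Ico 0 1))
    (hmono : MonotoneOn (fun x => V x ^ 2) (Ico 0 1)) {C : ℝ}
    (hC : ∀ x ∈ Ico 0 1, V x ^ 2 ≤ C) : ContinuousOn (Kfun E₀ V) (Icc 0 1) :=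
  continuousOn_id.mul ((continuousOn_Hfun hV hmono hC).add (by fun_prop))

theorem hasDerivAt_Kfun (hV : ContinuousOn V (Ico 0 1))
    (hmono : MonotoneOn (fun x => V x ^ 2) (Ico 0 1)) {C : ℝ}
    (hC : ∀ x ∈ Ico 0 1, V x ^ 2 ≤ C) (hx : x ∈ Ioo 0 1) :
    HasDerivAt (Kfun E₀ V) (Hfun V x - (x⁻¹ - x) * swirlIntegral V x + E₀ * (1 - 2 * x)) x := by
  have hx0 : x ≠ 0 := hx.1.ne'
  refine ((hasDerivAt_id' x).mul ((hasDerivAt_Hfun hV hmono hC hx).add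
    (((hasDerivAt_id' x).const_sub 1).const_mul E₀))).congr_deriv ?_
  simp only [Pi.add_apply]
  field_simp
  ring

theorem hasDerivAt_deriv_Kfun (hV : ContinuousOn V (Ico 0 1))
    (hmono : MonotoneOn (fun x => V x ^ 2) (Ico 0 1)) {C : ℝ}
    (hC : ∀ x ∈ Ico 0 1, V x ^ 2 ≤ C) (hx : x ∈ Ioo 0 1) :
    HasDerivAt (deriv (Kfun E₀ V))
      (2 * swirlIntegral V x - V x ^ 2 / (1 - x ^ 2) - 2 * E₀) x := by
  have hx0 : x ≠ 0 := hx.1.ne'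
  have hpos := one_sub_sq_pos (Ioo_subset_Ico_self hx)
  have hderiv : deriv (Kfun E₀ V) =ᶠ[𝓝 x]
      fun y => Hfun V y - (y⁻¹ - y) * swirlIntegral V y + E₀ * (1 - 2 * y) := by
    filter_upwards [Ioo_mem_nhds hx.1 hx.2] with y hy
    exact (hasDerivAt_Kfun hV hmono hC hy).deriv
  refine HasDerivAt.congr_of_eventuallyEq ?_ hderiv
  refine (((hasDerivAt_Hfun hV hmono hC hx).sub (((hasDerivAt_inv hx0).sub
    (hasDerivAt_id' x)).mul (hasDerivAt_swirlIntegral hV hx))).add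
    ((((hasDerivAt_id' x).const_mul 2).const_sub 1).const_mul E₀)).congr_deriv ?_
  simp only [Pi.sub_apply]
  field_simp
  ring

theorem concaveOn_deriv_Kfun (hV : ContinuousOn V (Ico 0 1))
    (hmono : MonotoneOn (fun x => V x ^ 2) (Ico 0 1)) {C : ℝ}
    (hC : ∀ x ∈ Ico 0 1, V x ^ 2 ≤ C) : ConcaveOn ℝ (Ioo 0 1) (deriv (Kfun E₀ V)) := by
  have hK := fun x (hx : x ∈ Ioo (0 : ℝ) 1) => hasDerivAt_deriv_Kfun (E₀ := E₀) hV hmono hC hx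
  have hdiff : DifferentiableOn ℝ (deriv (Kfun E₀ V)) (Ioo 0 1) := fun x hx =>
    (hK x hx).differentiableAt.differentiableWithinAt
  refine AntitoneOn.concaveOn_of_deriv (convex_Ioo 0 1) hdiff.continuousOn
    (hdiff.mono interior_subset) ?_
  rw [interior_Ioo]
  intro x hx y hy hxy
  rw [(hK x hx).deriv, (hK y hy).deriv]
  have hx' : x ∈ Ico 0 1 := Ioo_subset_Ico_self hx
  have hy' : y ∈ Ico 0 1 := Ioo_subset_Ico_self hy
  have hJ := swirlIntegral_sub_le hV hmono hx' hy' hxy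
  have hV2 : V x ^ 2 * (1 - x ^ 2)⁻¹ ≤ V y ^ 2 * (1 - x ^ 2)⁻¹ :=
    mul_le_mul_of_nonneg_right (hmono hx' hy' hxy) (inv_pos.2 (one_sub_sq_pos hx')).le
  rw [div_eq_mul_inv, div_eq_mul_inv]
  linarith

theorem Kfun_add_mul_le (hV : ContinuousOn V (Ico 0 1))
    (hmono : MonotoneOn (fun x => V x ^ 2) (Ico 0 1)) {C : ℝ}
    (hC : ∀ x ∈ Ico 0 1, V x ^ 2 ≤ C) {m p q r : ℝ} (hp : 0 < p) (hpq : p < q) (hqr : q < r)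
    (hr : r < 1) (hKp : 0 < Kfun E₀ V p + m * p)
    (hKpq : Kfun E₀ V q + m * q ≤ Kfun E₀ V p + m * p) :
    Kfun E₀ V r + m * r ≤ Kfun E₀ V q + m * q := by
  have hsub : Ioo 0 r ⊆ Ioo 0 1 := Ioo_subset_Ioo_right hr.le
  have hcont : ContinuousOn (fun x => Kfun E₀ V x + m * x) (Icc 0 r) :=
    ((continuousOn_Kfun hV hmono hC).mono (Icc_subset_Icc_right hr.le)).add (by fun_prop)
  have hderiv : ∀ x ∈ Ioo 0 r,
      HasDerivAt (fun x => Kfun E₀ V x + m * x) (deriv (Kfun E₀ V) x + m) x := fun x hx =>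
    (hasDerivAt_Kfun hV hmono hC (hsub hx)).differentiableAt.hasDerivAt.add
      (hasDerivAt_const_mul m)
  have hconc : ConcaveOn ℝ (Ioo 0 r) fun x => deriv (Kfun E₀ V) x + m :=
    ((concaveOn_deriv_Kfun hV hmono hC).subset hsub (convex_Ioo 0 r)).add_const m
  refine le_of_quasiconcaveOn_deriv hcont hderiv hconc.quasiconcaveOn hp hpq hqr ?_ hKpq
  simpa only [Kfun, zero_mul, mul_zero, add_zero] using hKp

end Swirl

/-- The weighted velocity `A(x) = (1−x²)Θ(x)`. -/
noncomputable def Afun (Θ : ℝ → ℝ) (x : ℝ) : ℝ :=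
  (1 - x ^ 2) * Θ x

section Weighted

variable {ν E₀ Vinf : ℝ} {Θ V : ℝ → ℝ}

theorem Afun_zero (hΘ : Θ 0 = 0) : Afun Θ 0 = 0 := by
  rw [Afun, hΘ, mul_zero]

theorem Afun_one : Afun Θ 1 = 0 := by
  rw [Afun, one_pow, sub_self, zero_mul]

theorem Afun_neg (hB : BoundB E₀ Vinf Θ) {x : ℝ} (hx : x ∈ Ioo 0 1) : Afun Θ x < 0 :=
  mul_neg_of_pos_of_neg (one_sub_sq_pos (Ioo_subset_Ico_self hx)) (hB x hx).2

theorem abs_Afun_le (hB : BoundB E₀ Vinf Θ) (hΘ : Θ 0 = 0) {x : ℝ} (hx : x ∈ Icc 0 1) :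
    |Afun Θ x| ≤ Real.sqrt (2 * E₀ + Vinf ^ 2) * Real.sqrt (x * (1 - x)) := by
  rcases hx.1.eq_or_lt with rfl | hx0
  · simp [Afun_zero hΘ]
  rcases hx.2.eq_or_lt with rfl | hx1
  · simp [Afun_one]
  have hlower := (hB x ⟨hx0, hx1⟩).1
  rw [div_lt_iff₀ (one_sub_sq_pos ⟨hx0.le, hx1⟩)] at hlower
  rw [abs_of_neg (Afun_neg hB ⟨hx0, hx1⟩), Afun]
  linarith

theorem continuousOn_Afun (hΘ : ContinuousOn Θ (Ico 0 1))
    (hA1 : Tendsto (Afun Θ) (𝓝[<] 1) (𝓝 0)) : ContinuousOn (Afun Θ) (Icc 0 1) := by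
  have hIco : ContinuousOn (Afun Θ) (Ico 0 1) := .mul (by fun_prop) hΘ
  intro x hx
  rcases hx.2.eq_or_lt with rfl | hx1
  · have hleft : ContinuousWithinAt (Afun Θ) (Iio 1) 1 := by rwa [ContinuousWithinAt, Afun_one]
    exact (continuousWithinAt_Iio_iff_Iic.1 hleft).mono Icc_subset_Iic_self
  · exact (hIco x ⟨hx.1, hx1⟩).mono_of_mem_nhdsWithin
      (mem_of_superset (inter_mem_nhdsWithin _ (Iio_mem_nhds hx1)) fun y hy => ⟨hy.1.1, hy.2⟩)

theorem IsNSSolution.Kfun_eq_of_isLocalExtr (h : IsNSSolution ν E₀ Vinf Θ V) {x : ℝ}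
    (hx : x ∈ Ioo 0 1) (hext : IsLocalExtr (Afun Θ) x) :
    Kfun E₀ V x = Afun Θ x ^ 2 / 2 - 2 * ν * x * Afun Θ x := by
  have hΘ : HasDerivAt Θ (deriv Θ x) x :=
    ((h.hΘreg.differentiableOn one_ne_zero).differentiableAt (Ico_mem_nhds hx.1 hx.2)).hasDerivAt
  have hcrit : -(2 * x) * Θ x + (1 - x ^ 2) * deriv Θ x = 0 :=
    hext.hasDerivAt_eq_zero ((hasDerivAt_one_sub_sq x).mul hΘ)
  have hF : (1 - x ^ 2) ^ 2 * Ffun E₀ V x = Kfun E₀ V x := by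
    have := (one_sub_sq_pos (Ioo_subset_Ico_self hx)).ne'
    unfold Ffun Kfun
    field_simp
  unfold Afun
  linear_combination (1 - x ^ 2) ^ 2 * h.hΘeq x hx - ν * (1 - x ^ 2) * hcrit - hF

theorem IsNSSolution.quasiconvexOn_Afun (h : IsNSSolution ν E₀ Vinf Θ V) (hν : 0 < ν)
    (hB : BoundB E₀ Vinf Θ) (hA1 : Tendsto (Afun Θ) (𝓝[<] 1) (𝓝 0)) :
    QuasiconvexOn ℝ (Icc 0 1) (Afun Θ) := by
  by_contra hnot
  obtain ⟨p, q, r, hp0, hpq, hqr, hr1, hp, hq, hr, hApq, hArq⟩ :=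
    exists_isLocalMin_isLocalMax_isLocalMin (continuousOn_Afun h.hΘreg.continuousOn hA1)
      (fun x hx => (Afun_neg hB hx).trans_eq (Afun_zero h.hΘ0).symm)
      (fun x hx => (Afun_neg hB hx).trans_eq Afun_one.symm) hnot
  set c : ℝ := Afun Θ q
  have hc : c < 0 := Afun_neg hB ⟨hp0.trans hpq, hqr.trans hr1⟩
  have hK_max : Kfun E₀ V q + 2 * ν * c * q = c ^ 2 / 2 := by
    rw [h.Kfun_eq_of_isLocalExtr ⟨hp0.trans hpq, hqr.trans hr1⟩ (.inr hq)]
    ring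
  have hK_min : ∀ x ∈ Ioo 0 1, IsLocalMin (Afun Θ) x → Afun Θ x < c →
      c ^ 2 / 2 < Kfun E₀ V x + 2 * ν * c * x := by
    intro x hx hmin hxc
    have hsq : c ^ 2 < Afun Θ x ^ 2 :=
      sq_lt_sq.2 (by rwa [abs_of_neg hc, abs_of_neg (hxc.trans hc), neg_lt_neg_iff])
    have hmul : 0 < ν * x * (c - Afun Θ x) := mul_pos (mul_pos hν hx.1) (sub_pos.2 hxc)
    rw [h.Kfun_eq_of_isLocalExtr hx (.inl hmin)]
    linarith
  have hKp := hK_min p ⟨hp0, hpq.trans (hqr.trans hr1)⟩ hp hApq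
  have hKr := hK_min r ⟨hp0.trans (hpq.trans hqr), hr1⟩ hr hArq
  have hKqr := Kfun_add_mul_le h.hVreg.continuousOn (h.monotoneOn_sq hν.ne')
    (fun _ hx => h.sq_le hν.ne' hx) hp0 hpq hqr hr1
    ((half_pos (sq_pos_of_neg hc)).trans hKp) (hK_max.trans_le hKp.le)
  exact (hKr.trans_le hKqr).ne' hK_max

theorem IsNSSolution.exists_antitoneOn_monotoneOn_Afun (h : IsNSSolution ν E₀ Vinf Θ V)
    (hν : 0 < ν) (hB : BoundB E₀ Vinf Θ) (hA1 : Tendsto (Afun Θ) (𝓝[<] 1) (𝓝 0)) :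
    ∃ c ∈ Icc (0 : ℝ) 1, AntitoneOn (Afun Θ) (Icc 0 c) ∧ MonotoneOn (Afun Θ) (Icc c 1) :=
  exists_antitoneOn_monotoneOn_of_quasiconvexOn zero_le_one
    (continuousOn_Afun h.hΘreg.continuousOn hA1) (h.quasiconvexOn_Afun hν hB hA1)

theorem IsNSSolution.eVariationOn_Afun_le (h : IsNSSolution ν E₀ Vinf Θ V) (hν : 0 < ν)
    (hB : BoundB E₀ Vinf Θ) (hA1 : Tendsto (Afun Θ) (𝓝[<] 1) (𝓝 0)) :
    eVariationOn (Afun Θ) (Icc 0 1) ≤ ENNReal.ofReal (Real.sqrt (2 * E₀ + Vinf ^ 2)) := by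
  obtain ⟨c, hc, hanti, hmono⟩ := h.exists_antitoneOn_monotoneOn_Afun hν hB hA1
  have hsqrt : Real.sqrt (c * (1 - c)) ≤ 1 / 2 :=
    Real.sqrt_le_iff.2 ⟨by norm_num, by linarith [sq_nonneg (c - 1 / 2)]⟩
  have hAc : |Afun Θ c| ≤ Real.sqrt (2 * E₀ + Vinf ^ 2) * (1 / 2) :=
    (abs_Afun_le hB h.hΘ0 hc).trans (mul_le_mul_of_nonneg_left hsqrt (Real.sqrt_nonneg _))
  have hAc' : 0 ≤ -Afun Θ c := by
    linarith [Afun_zero h.hΘ0, hanti (left_mem_Icc.2 hc.1) (right_mem_Icc.2 hc.1) hc.1]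
  rw [eVariationOn_Icc_of_antitoneOn_of_monotoneOn hc hanti hmono, Afun_zero h.hΘ0, Afun_one,
    zero_sub, ← ENNReal.ofReal_add hAc' hAc']
  refine ENNReal.ofReal_le_ofReal ?_
  linarith [neg_abs_le (Afun Θ c)]

end Weighted

theorem exists_subseq_tendsto_of_eVariationOn_Afun_le {Θ : ℕ → ℝ → ℝ} {C : ℝ≥0}
    (hC : ∀ k, eVariationOn (Afun (Θ k)) (Icc 0 1) ≤ C) {M : ℝ} (hM : ∀ k, |Θ k 0| ≤ M) :
    ∃ φ : ℕ → ℕ, StrictMono φ ∧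
      ∃ Θl : ℝ → ℝ, ∀ x ∈ Ico (0 : ℝ) 1, Tendsto (fun k => Θ (φ k) x) atTop (𝓝 (Θl x)) := by
  obtain ⟨φ, hφ, G, hG⟩ := exists_subseq_tendsto_of_eVariationOn_le zero_le_one hC (M := M)
    fun k => by simpa [Afun] using hM k
  refine ⟨φ, hφ, fun x => (1 - x ^ 2)⁻¹ * G x, fun x hx => ?_⟩
  refine ((hG x (Ico_subset_Icc_self hx)).const_mul (1 - x ^ 2)⁻¹).congr fun k => ?_
  exact inv_mul_cancel_left₀ (one_sub_sq_pos hx).ne' _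

theorem bounded_variation_compactness_general (E₀ Vinf : ℝ) (Θ V : ℝ → ℝ → ℝ)
    (hsol : ∀ ν : ℝ, 0 < ν → IsNSSolution ν E₀ Vinf (Θ ν) (V ν))
    (hB : ∀ ν : ℝ, 0 < ν → BoundB E₀ Vinf (Θ ν))
    (hA1 : ∀ ν : ℝ, 0 < ν → Tendsto (Afun (Θ ν)) (𝓝[<] 1) (𝓝 0)) :
    (∀ ν : ℝ, 0 < ν → eVariationOn (Afun (Θ ν)) (Icc 0 1) ≤
      ENNReal.ofReal (Real.sqrt (2 * E₀ + Vinf ^ 2))) ∧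
    (∀ ν : ℝ, 0 < ν → ∃ c ∈ Icc (0 : ℝ) 1,
      AntitoneOn (Afun (Θ ν)) (Icc 0 c) ∧ MonotoneOn (Afun (Θ ν)) (Icc c 1)) ∧
    (∀ ν : ℝ, 0 < ν → ∀ x ∈ Icc (0 : ℝ) 1,
      |Afun (Θ ν) x| ≤ Real.sqrt (2 * E₀ + Vinf ^ 2) * Real.sqrt (x * (1 - x))) ∧
    (∃ νk : ℕ → ℝ, (∀ k, 0 < νk k) ∧ Tendsto νk atTop (𝓝 0) ∧
      ∃ Θl : ℝ → ℝ, ∀ x ∈ Ico (0 : ℝ) 1, Tendsto (fun k => Θ (νk k) x) atTop (𝓝 (Θl x))) := by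
  have hvar : ∀ ν : ℝ, 0 < ν → eVariationOn (Afun (Θ ν)) (Icc 0 1) ≤
      ENNReal.ofReal (Real.sqrt (2 * E₀ + Vinf ^ 2)) := fun ν hν =>
    (hsol ν hν).eVariationOn_Afun_le hν (hB ν hν) (hA1 ν hν)
  refine ⟨hvar, fun ν hν => (hsol ν hν).exists_antitoneOn_monotoneOn_Afun hν (hB ν hν) (hA1 ν hν),
    fun ν hν x hx => abs_Afun_le (hB ν hν) (hsol ν hν).hΘ0 hx, ?_⟩
  have hpos : ∀ k : ℕ, (0 : ℝ) < 1 / (k + 1) := fun k => Nat.one_div_pos_of_nat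
  obtain ⟨φ, hφ, Θl, hΘl⟩ := exists_subseq_tendsto_of_eVariationOn_Afun_le (M := 0)
    (Θ := fun k : ℕ => Θ (1 / (k + 1))) (fun k => hvar _ (hpos k))
    fun k => by rw [(hsol _ (hpos k)).hΘ0, abs_zero]
  exact ⟨fun k => 1 / (φ k + 1), fun k => hpos (φ k),
    tendsto_one_div_add_atTop_nhds_zero_nat.comp hφ.tendsto_atTop, Θl, hΘl⟩

/-- Compactness via bounded variation: if `E₀ > 0` and the family of solutions satisfies the
uniform bound (B) and `(1−x²)Θ_ν(x) → 0` as `x → 1⁻`, then the functions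
`A_ν(x) = (1−x²)Θ_ν(x)` have uniformly bounded variation on `[0,1]` (each `A_ν` is first
nonincreasing, then nondecreasing, and `|A_ν(x)| ≤ √(2E₀+V∞²) √(x(1−x))`), and consequently
some sequence `Θ_{ν_k}` with `ν_k → 0` converges almost everywhere on `(0,1)`. -/
theorem bounded_variation_compactness (E₀ Vinf : ℝ) (hVinf : 0 < Vinf) (hE₀ : 0 < E₀)
    (Θ V : ℝ → ℝ → ℝ)
    (hsol : ∀ ν : ℝ, 0 < ν → IsNSSolution ν E₀ Vinf (Θ ν) (V ν))
    (hB : ∀ ν : ℝ, 0 < ν → BoundB E₀ Vinf (Θ ν))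
    (hA1 : ∀ ν : ℝ, 0 < ν →
      Tendsto (fun x => (1 - x ^ 2) * Θ ν x) (nhdsWithin 1 (Set.Iio 1)) (nhds 0)) :
    (∃ C : ℝ, ∀ ν : ℝ, 0 < ν →
      eVariationOn (fun x => (1 - x ^ 2) * Θ ν x) (Set.Icc 0 1) ≤ ENNReal.ofReal C) ∧
    (∀ ν : ℝ, 0 < ν → ∃ c ∈ Set.Icc (0 : ℝ) 1,
      AntitoneOn (fun x => (1 - x ^ 2) * Θ ν x) (Set.Icc 0 c) ∧
      MonotoneOn (fun x => (1 - x ^ 2) * Θ ν x) (Set.Icc c 1)) ∧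
    (∀ ν : ℝ, 0 < ν → ∀ x ∈ Set.Icc (0 : ℝ) 1,
      |(1 - x ^ 2) * Θ ν x| ≤ Real.sqrt (2 * E₀ + Vinf ^ 2) * Real.sqrt (x * (1 - x))) ∧
    (∃ νk : ℕ → ℝ, (∀ k, 0 < νk k) ∧ Tendsto νk atTop (nhds 0) ∧
      ∃ Θl : ℝ → ℝ, ∀ᵐ x ∂(volume.restrict (Set.Ioo (0 : ℝ) 1)),
        Tendsto (fun k => Θ (νk k) x) atTop (nhds (Θl x))) := by
  obtain ⟨hvar, hshape, hbound, νk, hpos, hνk, Θl, hΘl⟩ :=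
    bounded_variation_compactness_general E₀ Vinf Θ V hsol hB hA1
  exact ⟨⟨_, hvar⟩, hshape, hbound, νk, hpos, hνk, Θl,
    ae_restrict_of_forall_mem measurableSet_Ioo fun x hx => hΘl x (Ioo_subset_Ico_self hx)⟩
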